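/- Let O and O' be regular turn orders for two multi-walker stack walks on G with the same initial locations x ∈ V^n and the same initial stack ξ. Then the stack walk with turn order O is recurrent if and only if the stack walk with turn order O' is recurrent. -/

import Mathlib

/-!
The argument is the abelian property of stack walks. Let `odo t v` be the number of pops of the
stack at `v` before time `t`. Cards are only ever removed from the top, so the stack at time `t`
is the initial one shifted by `odo t` (`walk_stack`), and the card `(y, m)` with `m < odo t y`
sends a walker to `ξ0 y (m + 1)`. Counting arrivals and departures at `v` (`balance`),

  walkers starting at `v` + popped cards pointing to `v` = walkers now at `v` + `odo t v`,

so the number of walkers at `v` is determined by the odometer alone.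

From this follows a least action principle (`exists_odo_le`): for every time `t` of one walk,
a regular walk has a time `s` at which its odometer dominates `odo t` everywhere. Indeed, if the
first walk is about to pop `v` and the second has popped `v` equally often but every other vertex
at least as often, then by `balance` the second walk also has a walker at `v`, and this walker
eventually moves. Finally, in a regular walk every stay at a vertex ends, so recurrence means
that `odo` is unbounded at every vertex (`recurrent_iff`), a condition that transfers by the least
action principle.
-/

open Filter

namespace StackWalk

variable {V : Type*}

/-- The state of a multi-walker stack walk: the positions of the `n` walkers together
with the current stack. -/
abbrev State (V : Type*) (n : ℕ) := (Fin n → V) × (V → ℕ → V)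

/-- `ξ` is a stack of the graph `G`: `ξ x m` is always a neighbor of `x`. -/
def IsStack (G : SimpleGraph V) (ξ : V → ℕ → V) : Prop :=
  ∀ x m, G.Adj x (ξ x m)

/-- A stack is regular if, for every vertex `x`, every neighbor of `x` appears
infinitely many times in the stack of `x`. -/
def RegularStack (G : SimpleGraph V) (ξ : V → ℕ → V) : Prop :=
  ∀ x y, G.Adj x y → {m : ℕ | ξ x m = y}.Infinite

open Classical in
/-- The popping operation at `x`: remove the top card of the stack of `x`. -/
noncomputable def pop (x : V) (ξ : V → ℕ → V) : V → ℕ → V :=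
  fun y m => if y = x then ξ y (m + 1) else ξ y m

/-- One step of the stack walk performed by walker `i`: the stack at the current
location of walker `i` is popped, and walker `i` moves to the new top card. -/
noncomputable def step (n : ℕ) (s : State V n) (i : Fin n) : State V n :=
  (Function.update s.1 i (pop (s.1 i) s.2 (s.1 i) 0), pop (s.1 i) s.2)

/-- The multi-walker stack walk with initial locations `x0`, initial stack `ξ0` and
turn order `o` (where `o t = some i` means walker `i` moves at the `(t+1)`-st step, and
`o t = none` means nobody moves). -/
noncomputable def walk (n : ℕ) (x0 : Fin n → V) (ξ0 : V → ℕ → V)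
    (o : ℕ → Option (Fin n)) : ℕ → State V n
  | 0 => (x0, ξ0)
  | t + 1 =>
    match o t with
    | none => walk n x0 ξ0 o t
    | some i => step n (walk n x0 ξ0 o t) i

/-- A turn order is regular if every walker performs infinitely many steps. -/
def RegularOrder (n : ℕ) (o : ℕ → Option (Fin n)) : Prop :=
  ∀ i : Fin n, {t : ℕ | o t = some i}.Infinite

/-- A (trajectory of a) stack walk is recurrent if every vertex is visited infinitely
many times. -/
def Recurrent (n : ℕ) (w : ℕ → State V n) : Prop :=
  ∀ v : V, {t : ℕ | ∃ i, (w t).1 i = v}.Infinite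

/-- A (trajectory of a) stack walk is transient if every vertex is visited at most
finitely many times. -/
def Transient (n : ℕ) (w : ℕ → State V n) : Prop :=
  ∀ v : V, {t : ℕ | ∃ i, (w t).1 i = v}.Finite

end StackWalk

namespace StackWalk

variable {V : Type*} {n : ℕ} {x0 : Fin n → V} {ξ0 : V → ℕ → V} {o o' : ℕ → Option (Fin n)}

/-! ### The odometer -/

open Classical in
/-- The odometer: `odo n x0 ξ0 o t v` is the number of times the stack at `v` is popped during
the first `t` steps. -/
noncomputable def odo (n : ℕ) (x0 : Fin n → V) (ξ0 : V → ℕ → V)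
    (o : ℕ → Option (Fin n)) : ℕ → V → ℕ
  | 0 => fun _ => 0
  | t + 1 =>
    match o t with
    | none => odo n x0 ξ0 o t
    | some i => fun v =>
      odo n x0 ξ0 o t v + if (walk n x0 ξ0 o t).1 i = v then 1 else 0

/-- The cards pointing to `v` among those popped according to the odometer `u`. The card exposed
by the pop number `m + 1` at `y` is `ξ0 y (m + 1)`, since `ξ0 y 0` is never used for a move. -/
def arrivals (ξ0 : V → ℕ → V) (u : V → ℕ) (v : V) : Set (V × ℕ) :=
  {p | p.2 < u p.1 ∧ ξ0 p.1 (p.2 + 1) = v}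

lemma walk_succ_none {t : ℕ} (h : o t = none) :
    walk n x0 ξ0 o (t + 1) = walk n x0 ξ0 o t := by
  simp [walk, h]

lemma walk_succ_some {t : ℕ} {i : Fin n} (h : o t = some i) :
    walk n x0 ξ0 o (t + 1) = step n (walk n x0 ξ0 o t) i := by
  simp [walk, h]

lemma odo_succ_none {t : ℕ} (h : o t = none) :
    odo n x0 ξ0 o (t + 1) = odo n x0 ξ0 o t := by
  simp [odo, h]

open Classical in
lemma odo_succ_some {t : ℕ} {i : Fin n} (h : o t = some i) (v : V) :
    odo n x0 ξ0 o (t + 1) v =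
      odo n x0 ξ0 o t v + if (walk n x0 ξ0 o t).1 i = v then 1 else 0 := by
  simp [odo, h]

lemma odo_le_succ (t : ℕ) (v : V) : odo n x0 ξ0 o t v ≤ odo n x0 ξ0 o (t + 1) v := by
  cases h : o t with
  | none => rw [odo_succ_none h]
  | some i => rw [odo_succ_some h]; omega

lemma odo_mono {s t : ℕ} (h : s ≤ t) (v : V) : odo n x0 ξ0 o s v ≤ odo n x0 ξ0 o t v :=
  monotone_nat_of_le_succ (f := fun t => odo n x0 ξ0 o t v) (fun t => odo_le_succ t v) h

lemma walk_stack (t : ℕ) (v : V) (m : ℕ) :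
    (walk n x0 ξ0 o t).2 v m = ξ0 v (m + odo n x0 ξ0 o t v) := by
  induction t generalizing m with
  | zero => simp [walk, odo]
  | succ t ih =>
    cases h : o t with
    | none => rw [walk_succ_none h, odo_succ_none h, ih]
    | some i =>
      rw [walk_succ_some h, odo_succ_some h]
      by_cases hv : (walk n x0 ξ0 o t).1 i = v
      · subst hv
        simp only [step, pop, if_true, ih]
        congr 1
        omega
      · simp [step, pop, hv, Ne.symm hv, ih]

lemma walk_pos_succ {t : ℕ} {i : Fin n} (h : o t = some i) :
    (walk n x0 ξ0 o (t + 1)).1 =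
      Function.update (walk n x0 ξ0 o t).1 i
        (ξ0 ((walk n x0 ξ0 o t).1 i) (odo n x0 ξ0 o t ((walk n x0 ξ0 o t).1 i) + 1)) := by
  rw [walk_succ_some h]
  simp only [step, pop, if_true, walk_stack]
  congr 2
  omega

lemma walk_pos_of_ne {t : ℕ} {j : Fin n} (h : o t ≠ some j) :
    (walk n x0 ξ0 o (t + 1)).1 j = (walk n x0 ξ0 o t).1 j := by
  cases h' : o t with
  | none => rw [walk_succ_none h']
  | some i =>
    rw [walk_pos_succ h', Function.update_of_ne]
    rintro rfl
    exact h h'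

/-! ### Arrivals and departures -/

lemma finite_popped (t : ℕ) : {p : V × ℕ | p.2 < odo n x0 ξ0 o t p.1}.Finite := by
  induction t with
  | zero => simp [odo]
  | succ t ih =>
    cases h : o t with
    | none => rwa [odo_succ_none h]
    | some i =>
      refine (ih.insert ((walk n x0 ξ0 o t).1 i,
        odo n x0 ξ0 o t ((walk n x0 ξ0 o t).1 i))).subset ?_
      rintro ⟨y, m⟩ hp
      simp only [Set.mem_ofPred_eq, Set.mem_insert_iff, Prod.mk.injEq] at hp ⊢
      rw [odo_succ_some h] at hp
      split_ifs at hp with hy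
      · subst hy
        simp only [true_and]
        omega
      · right; omega

lemma finite_arrivals (t : ℕ) (v : V) : (arrivals ξ0 (odo n x0 ξ0 o t) v).Finite :=
  (finite_popped t).subset fun _ hp => hp.1

open Classical in
/-- A pop turns one unexposed card into an arrival at its target. -/
lemma ncard_arrivals_succ {t : ℕ} {i : Fin n} (h : o t = some i) (v : V) :
    (arrivals ξ0 (odo n x0 ξ0 o (t + 1)) v).ncard =
      (arrivals ξ0 (odo n x0 ξ0 o t) v).ncard +
        if (walk n x0 ξ0 o (t + 1)).1 i = v then 1 else 0 := by
  rw [walk_pos_succ h, Function.update_self]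
  set y := (walk n x0 ξ0 o t).1 i with hy
  have key : ∀ p : V × ℕ, p.2 < odo n x0 ξ0 o (t + 1) p.1 ↔
      p = (y, odo n x0 ξ0 o t y) ∨ p.2 < odo n x0 ξ0 o t p.1 := by
    rintro ⟨z, m⟩
    simp only [odo_succ_some h, ← hy, Prod.mk.injEq]
    by_cases hz : y = z
    · subst hz
      simp only [if_true, true_and]
      omega
    · simp [hz, Ne.symm hz]
  split_ifs with hv
  · have : arrivals ξ0 (odo n x0 ξ0 o (t + 1)) v =
        insert (y, odo n x0 ξ0 o t y) (arrivals ξ0 (odo n x0 ξ0 o t) v) := by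
      ext p
      simp only [arrivals, Set.mem_ofPred_eq, Set.mem_insert_iff, key]
      constructor
      · tauto
      · rintro (rfl | hp)
        · exact ⟨Or.inl rfl, hv⟩
        · tauto
    rw [this, Set.ncard_insert_of_notMem _ (finite_arrivals t v)]
    simp [arrivals]
  · have : arrivals ξ0 (odo n x0 ξ0 o (t + 1)) v = arrivals ξ0 (odo n x0 ξ0 o t) v := by
      ext p
      simp only [arrivals, Set.mem_ofPred_eq, key]
      constructor
      · rintro ⟨rfl | hp, hq⟩
        · exact absurd hq hv
        · exact ⟨hp, hq⟩
      · tauto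
    rw [this, add_zero]

open Classical in
/-- Conservation of walkers at `v`. The equation holds even if some card at `v` points to `v`,
such a card being counted once as an arrival and once as a departure. -/
lemma balance (t : ℕ) (v : V) :
    (∑ j, if x0 j = v then 1 else 0) + (arrivals ξ0 (odo n x0 ξ0 o t) v).ncard =
      (∑ j, if (walk n x0 ξ0 o t).1 j = v then 1 else 0) + odo n x0 ξ0 o t v := by
  induction t with
  | zero =>
    simp only [walk, odo, arrivals, Nat.not_lt_zero, false_and,
      Set.ofPred_false, Set.ncard_empty]
    rfl
  | succ t ih =>
    cases h : o t with
    | none => rw [walk_succ_none h, odo_succ_none h, ih]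
    | some i =>
      rw [ncard_arrivals_succ h, odo_succ_some h]
      have e1 := Finset.add_sum_erase Finset.univ
        (fun j => if (walk n x0 ξ0 o (t + 1)).1 j = v then 1 else 0) (Finset.mem_univ i)
      have e2 := Finset.add_sum_erase Finset.univ
        (fun j => if (walk n x0 ξ0 o t).1 j = v then 1 else 0) (Finset.mem_univ i)
      have e3 : ∑ j ∈ Finset.univ.erase i, (if (walk n x0 ξ0 o (t + 1)).1 j = v then 1 else 0) =
          ∑ j ∈ Finset.univ.erase i, (if (walk n x0 ξ0 o t).1 j = v then 1 else 0) := by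
        refine Finset.sum_congr rfl fun j hj => ?_
        rw [walk_pos_of_ne]
        rw [h]
        exact fun hij => (Finset.ne_of_mem_erase hj) (Option.some.inj hij).symm
      omega

/-! ### Least action principle -/

/-- In a regular walk every stay at a vertex ends. -/
lemma exists_odo_lt (ho : RegularOrder n o) {s : ℕ} {j : Fin n} {v : V}
    (hv : (walk n x0 ξ0 o s).1 j = v) :
    ∃ s', s ≤ s' ∧ odo n x0 ξ0 o s v < odo n x0 ξ0 o s' v := by
  have key : ∀ d s, o (s + d) = some j → (walk n x0 ξ0 o s).1 j = v →
      odo n x0 ξ0 o s v < odo n x0 ξ0 o (s + d + 1) v := by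
    intro d
    induction d with
    | zero =>
      intro s h hv
      have h : o s = some j := h
      rw [add_zero, odo_succ_some h, if_pos hv]
      omega
    | succ d ih =>
      intro s h hv
      by_cases hs : o s = some j
      · have h1 : odo n x0 ξ0 o (s + 1) v ≤ odo n x0 ξ0 o (s + (d + 1) + 1) v :=
          odo_mono (by omega) v
        rw [odo_succ_some hs, if_pos hv] at h1
        omega
      · have h1 := ih (s + 1) (by rwa [add_right_comm, add_assoc])
          ((walk_pos_of_ne hs).trans hv)
        rw [show s + (d + 1) + 1 = s + 1 + d + 1 by omega]
        exact (odo_le_succ s v).trans_lt h1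
  obtain ⟨r, hr, hsr⟩ := (ho j).exists_gt s
  obtain ⟨d, rfl⟩ := Nat.exists_eq_add_of_lt hsr
  exact ⟨s + (d + 1) + 1, by omega, key (d + 1) s hr hv⟩

/-- Least action principle: a regular walk eventually performs at every vertex at least the pops
performed by a given time in any other walk with the same initial state. -/
lemma exists_odo_le (ho' : RegularOrder n o') (t : ℕ) :
    ∃ s, ∀ v, odo n x0 ξ0 o t v ≤ odo n x0 ξ0 o' s v := by
  classical
  induction t with
  | zero => exact ⟨0, fun v => by simp [odo]⟩
  | succ t ih =>
    obtain ⟨s, hs⟩ := ih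
    cases h : o t with
    | none => exact ⟨s, by rwa [odo_succ_none h]⟩
    | some i =>
      obtain ⟨y, hy⟩ : ∃ y, (walk n x0 ξ0 o t).1 i = y := ⟨_, rfl⟩
      -- It suffices to reach a time at which the second walk is strictly ahead at `y`.
      suffices hlt : ∃ s', s ≤ s' ∧ odo n x0 ξ0 o t y < odo n x0 ξ0 o' s' y by
        obtain ⟨s', hss', hlt⟩ := hlt
        refine ⟨s', fun v => ?_⟩
        rw [odo_succ_some h, hy]
        split_ifs with hv
        · subst hv; exact hlt
        · exact (hs v).trans (odo_mono hss' v)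
      rcases (hs y).lt_or_eq with hlt | heq
      · exact ⟨s, le_rfl, hlt⟩
      -- With equal counts at `y`, the second walk has had at least as many arrivals there.
      have b1 := balance (n := n) (x0 := x0) (ξ0 := ξ0) (o := o) t y
      have b2 := balance (n := n) (x0 := x0) (ξ0 := ξ0) (o := o') s y
      have hA : (arrivals ξ0 (odo n x0 ξ0 o t) y).ncard ≤
          (arrivals ξ0 (odo n x0 ξ0 o' s) y).ncard :=
        Set.ncard_le_ncard (fun p hp => ⟨hp.1.trans_le (hs _), hp.2⟩) (finite_arrivals s y)
      have hN : 1 ≤ ∑ j, if (walk n x0 ξ0 o t).1 j = y then 1 else 0 := by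
        have := Finset.single_le_sum
          (f := fun j => if (walk n x0 ξ0 o t).1 j = y then 1 else 0)
          (fun _ _ => Nat.zero_le _) (Finset.mem_univ i)
        simpa only [hy, if_true] using this
      have hN' : (∑ j, if (walk n x0 ξ0 o' s).1 j = y then 1 else 0) ≠ 0 := by omega
      obtain ⟨j, -, hj⟩ := Finset.exists_ne_zero_of_sum_ne_zero hN'
      have hjy : (walk n x0 ξ0 o' s).1 j = y := by
        by_contra hne
        exact hj (if_neg hne)
      rw [heq]
      exact exists_odo_lt ho' hjy

/-! ### Recurrence in terms of the odometer -/

lemma exists_visit {s t : ℕ} {v : V} (hst : s ≤ t)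
    (h : odo n x0 ξ0 o s v < odo n x0 ξ0 o t v) :
    ∃ r, s ≤ r ∧ ∃ i, (walk n x0 ξ0 o r).1 i = v := by
  induction t, hst using Nat.le_induction with
  | base => exact absurd h (lt_irrefl _)
  | succ t hst ih =>
    cases ht : o t with
    | none => exact ih (by rwa [odo_succ_none ht] at h)
    | some i =>
      rw [odo_succ_some ht] at h
      split_ifs at h with hv
      · exact ⟨t, hst, i, hv⟩
      · exact ih h

lemma recurrent_iff (ho : RegularOrder n o) :
    Recurrent n (walk n x0 ξ0 o) ↔ ∀ v k, ∃ t, k ≤ odo n x0 ξ0 o t v := by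
  constructor
  · intro hrec v k
    induction k with
    | zero => exact ⟨0, Nat.zero_le _⟩
    | succ k ih =>
      obtain ⟨t, ht⟩ := ih
      obtain ⟨r, ⟨i, hi⟩, htr⟩ := (hrec v).exists_gt t
      obtain ⟨s, -, hs⟩ := exists_odo_lt ho hi
      exact ⟨s, (ht.trans (odo_mono htr.le v)).trans_lt hs⟩
  · intro hub v
    refine Set.infinite_of_forall_exists_gt fun N => ?_
    obtain ⟨t, ht⟩ := hub v (odo n x0 ξ0 o (N + 1) v + 1)
    have hNt : N + 1 ≤ t := by
      by_contra! hlt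
      have := odo_mono (n := n) (x0 := x0) (ξ0 := ξ0) (o := o) hlt.le v
      omega
    obtain ⟨r, hr, hi⟩ := exists_visit hNt ht
    exact ⟨r, hi, hr⟩

lemma Recurrent.of_regular (ho : RegularOrder n o) (ho' : RegularOrder n o')
    (h : Recurrent n (walk n x0 ξ0 o)) : Recurrent n (walk n x0 ξ0 o') := by
  rw [recurrent_iff ho] at h
  rw [recurrent_iff ho']
  intro v k
  obtain ⟨t, ht⟩ := h v k
  obtain ⟨s, hs⟩ := exists_odo_le (x0 := x0) (ξ0 := ξ0) (o := o) ho' t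
  exact ⟨s, ht.trans (hs v)⟩

end StackWalk


/-- **Lemma (abelian property).**
Let `O` and `O'` be regular turn orders for two stack walks with the same initial
locations and the same initial stack.  Then the stack walk with turn order `O` is
recurrent if and only if the stack walk with turn order `O'` is recurrent. -/
theorem stack_walk_recurrent_iff_of_regular_orders
    {V : Type*} (G : SimpleGraph V) (hG : G.Connected) (hGlf : G.LocallyFinite)
    (n : ℕ) (hn : 0 < n) (x0 : Fin n → V) (ξ0 : V → ℕ → V)
    (hξ0 : StackWalk.IsStack G ξ0)
    (o o' : ℕ → Option (Fin n))
    (ho : StackWalk.RegularOrder n o) (ho' : StackWalk.RegularOrder n o') :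
    StackWalk.Recurrent n (StackWalk.walk n x0 ξ0 o) ↔
      StackWalk.Recurrent n (StackWalk.walk n x0 ξ0 o') := by
  exact ⟨StackWalk.Recurrent.of_regular ho ho', StackWalk.Recurrent.of_regular ho' ho⟩
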